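/- Assume the dataset D has ℓ¹ diameter at most 1, and let μ_D and μ_{D'} be the measures on ℝ^d obtained from Lebesgue measure with densities p and q, respectively (the laws of a single draw of the mixup-plus-Laplacian-noise mechanism on D and on D' = D \ {x₀}). Then for every measurable set U ⊆ ℝ^d, μ_D(U) ≤ e^{A}·μ_{D'}(U) and μ_{D'}(U) ≤ e^{B}·μ_D(U), where A = log(1 − k/n + exp(1/(kσ))·k/n) and B = log(n/(n − k + k·exp(−1/(kσ)))); i.e., a single draw of the mechanism satisfies (max{A, B}, 0)-differential privacy with respect to removing x₀. -/

import Mathlib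

open Finset MeasureTheory

/-- The d-dimensional isotropic Laplacian density with scale σ. -/
noncomputable def laplacianDensity (d : ℕ) (σ : ℝ) (η : Fin d → ℝ) : ℝ :=
  ((2 * σ) ^ d)⁻¹ * Real.exp (-(∑ i, |η i|) / σ)

/-- The mixup-plus-noise output density of a finite dataset `P`. -/
noncomputable def mixupDensity (d : ℕ) (σ : ℝ) (k : ℕ) (P : Finset (Fin d → ℝ))
    (z : Fin d → ℝ) : ℝ :=
  ((P.card.choose k : ℝ))⁻¹ *
    ∑ S ∈ P.powersetCard k, laplacianDensity d σ (z - (k : ℝ)⁻¹ • ∑ x ∈ S, x)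

/-- The law of a single draw of the mixup-plus-Laplacian-noise mechanism on `P`:
Lebesgue measure with density `p_P`. -/
noncomputable def mixupLaw (d : ℕ) (σ : ℝ) (k : ℕ) (P : Finset (Fin d → ℝ)) :
    Measure (Fin d → ℝ) :=
  volume.withDensity fun z => ENNReal.ofReal (mixupDensity d σ k P z)

/-!
Write `E = D \ {x₀}` and `n = #D`. A uniformly random `k`-subset of `D` avoids `x₀` with
probability `1 - k / n`, and is then uniform on the `k`-subsets of `E`; otherwise it is
`insert x₀ T` for a uniform `(k - 1)`-subset `T` of `E`. Replacing `x₀` by a uniform point of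
`E \ T` turns the latter into a uniform `k`-subset of `E` while moving the mixture mean by at most
`1 / k`, hence changing the Laplacian density by a factor between `exp (-(1 / (k * σ)))` and
`exp (1 / (k * σ))`. So the ratio of the density for `D` to that for `E` lies between
`1 - k / n + exp (-(1 / (k * σ))) * (k / n)` and `1 - k / n + exp (1 / (k * σ)) * (k / n)`.
-/

open scoped BigOperators

section PowersetCard

variable {α : Type*} [DecidableEq α] {s : Finset α} {x : α} {k : ℕ}

lemma sum_powersetCard_sum_insert {M : Type*} [AddCommMonoid M] (s : Finset α) (k : ℕ)
    (f : Finset α → M) :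
    ∑ T ∈ s.powersetCard k, ∑ y ∈ s \ T, f (insert y T) =
      (k + 1) • ∑ S ∈ s.powersetCard (k + 1), f S := by
  -- Both sides sum `f S` over the `(k + 1)`-subsets `S` with a marked point.
  have hmark : (k + 1) • ∑ S ∈ s.powersetCard (k + 1), f S =
      ∑ S ∈ s.powersetCard (k + 1), ∑ _y ∈ S, f S := by
    rw [smul_sum]
    refine sum_congr rfl fun S hS => ?_
    rw [sum_const, (mem_powersetCard.1 hS).2]
  rw [hmark, sum_sigma', sum_sigma']
  refine sum_bij' (fun p _ => ⟨insert p.2 p.1, p.2⟩) (fun p _ => ⟨p.1.erase p.2, p.2⟩)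
    ?_ ?_ ?_ ?_ fun _ _ => rfl
  · rintro ⟨T, y⟩ h
    simp only [mem_sigma, mem_powersetCard, mem_sdiff] at h ⊢
    obtain ⟨⟨hTs, hT⟩, hys, hyT⟩ := h
    exact ⟨⟨insert_subset hys hTs, by rw [card_insert_of_notMem hyT, hT]⟩, mem_insert_self _ _⟩
  · rintro ⟨S, y⟩ h
    simp only [mem_sigma, mem_powersetCard, mem_sdiff] at h ⊢
    obtain ⟨⟨hSs, hS⟩, hyS⟩ := h
    exact ⟨⟨(erase_subset _ _).trans hSs, by rw [card_erase_of_mem hyS, hS, Nat.add_sub_cancel]⟩,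
      hSs hyS, notMem_erase _ _⟩
  · rintro ⟨T, y⟩ h
    simp only [mem_sigma, mem_sdiff] at h
    simp only [erase_insert h.2.2]
  · rintro ⟨S, y⟩ h
    simp only [mem_sigma] at h
    simp only [insert_erase h.2]

lemma notMem_of_mem_powersetCard_erase {T : Finset α} (hT : T ∈ (s.erase x).powersetCard k) :
    x ∉ T :=
  fun hxT => notMem_erase x s ((mem_powersetCard.1 hT).1 hxT)

lemma sdiff_nonempty_of_mem_powersetCard {T : Finset α} (hk : k < #s) (hT : T ∈ s.powersetCard k) :
    (s \ T).Nonempty :=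
  sdiff_nonempty.2 fun hsT => hk.not_ge ((card_le_card hsT).trans (mem_powersetCard.1 hT).2.le)

lemma sum_powersetCard_succ_of_mem {M : Type*} [AddCommMonoid M] (hx : x ∈ s) (k : ℕ)
    (f : Finset α → M) :
    ∑ S ∈ s.powersetCard (k + 1), f S =
      ∑ S ∈ (s.erase x).powersetCard (k + 1), f S +
        ∑ T ∈ (s.erase x).powersetCard k, f (insert x T) := by
  conv_lhs => rw [← insert_erase hx, powersetCard_succ_insert (notMem_erase x s)]
  rw [sum_union, sum_image]
  · intro S hS T hT h
    rw [← erase_insert (notMem_of_mem_powersetCard_erase hS),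
      ← erase_insert (notMem_of_mem_powersetCard_erase hT), h]
  · refine disjoint_left.2 fun S hS hS' => ?_
    obtain ⟨T, -, rfl⟩ := mem_image.1 hS'
    exact notMem_of_mem_powersetCard_erase hS (mem_insert_self x T)

lemma expect_powersetCard_succ {K : Type*} [Semifield K] [CharZero K] (hk : k < #s)
    (f : Finset α → K) :
    𝔼 S ∈ s.powersetCard (k + 1), f S =
      𝔼 T ∈ s.powersetCard k, 𝔼 y ∈ s \ T, f (insert y T) := by
  have hinner : ∀ T ∈ s.powersetCard k,
      𝔼 y ∈ s \ T, f (insert y T) = (∑ y ∈ s \ T, f (insert y T)) / (#s - k : ℕ) := by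
    intro T hT
    obtain ⟨hTs, hcard⟩ := mem_powersetCard.1 hT
    rw [expect_eq_sum_div_card, card_sdiff_of_subset hTs, hcard]
  have hchoose : ((#s).choose (k + 1) : K) * (k + 1 : ℕ) = (#s).choose k * (#s - k : ℕ) := by
    exact_mod_cast Nat.choose_succ_right_eq #s k
  have hchoose_succ : ((#s).choose (k + 1) : K) ≠ 0 := by exact_mod_cast (Nat.choose_pos hk).ne'
  have hchoose_self : ((#s).choose k : K) ≠ 0 := by exact_mod_cast (Nat.choose_pos hk.le).ne'
  have hsub : ((#s - k : ℕ) : K) ≠ 0 := by exact_mod_cast (Nat.sub_pos_of_lt hk).ne'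
  rw [expect_congr rfl hinner, expect_eq_sum_div_card, expect_eq_sum_div_card, ← sum_div,
    sum_powersetCard_sum_insert, card_powersetCard, card_powersetCard, nsmul_eq_mul, div_div,
    div_eq_div_iff hchoose_succ (mul_ne_zero hsub hchoose_self),
    mul_comm _ ((#s).choose k : K), ← hchoose]
  ring

lemma expect_powersetCard_succ_of_mem {K : Type*} [Field K] [CharZero K] (hx : x ∈ s)
    (hk : k + 1 < #s) (f : Finset α → K) :
    𝔼 S ∈ s.powersetCard (k + 1), f S =
      (1 - (k + 1 : ℕ) / #s) * 𝔼 S ∈ (s.erase x).powersetCard (k + 1), f S +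
        (k + 1 : ℕ) / #s * 𝔼 T ∈ (s.erase x).powersetCard k, f (insert x T) := by
  obtain ⟨m, hm⟩ : ∃ m, #s = m + 1 := ⟨#s - 1, by lia⟩
  have hcard : #(s.erase x) = m := by rw [card_erase_of_mem hx, hm, Nat.add_sub_cancel]
  have hwithout : (m.choose (k + 1) : K) * (m + 1) = (m + 1).choose (k + 1) * (m - k) := by
    have h := congrArg (Nat.cast (R := K)) (Nat.choose_mul_succ_eq m (k + 1))
    rw [Nat.add_sub_add_right] at h
    push_cast [Nat.cast_sub (show k ≤ m by lia)] at h
    exact h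
  have hwith : (m + 1 : K) * m.choose k = (m + 1).choose (k + 1) * (k + 1) := by
    exact_mod_cast Nat.add_one_mul_choose_eq m k
  have hchoose_all : ((m + 1).choose (k + 1) : K) ≠ 0 := by
    exact_mod_cast (Nat.choose_pos (by lia)).ne'
  have hchoose_without : (m.choose (k + 1) : K) ≠ 0 := by
    exact_mod_cast (Nat.choose_pos (by lia)).ne'
  have hchoose_with : (m.choose k : K) ≠ 0 := by exact_mod_cast (Nat.choose_pos (by lia)).ne'
  simp only [expect_eq_sum_div_card, card_powersetCard, hcard, hm,
    sum_powersetCard_succ_of_mem hx]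
  have hweight_without : (1 - ((k + 1 : ℕ) : K) / (m + 1 : ℕ)) / m.choose (k + 1) =
      1 / (m + 1).choose (k + 1) := by
    push_cast
    field_simp
    linear_combination -hwithout
  have hweight_with : ((k + 1 : ℕ) : K) / (m + 1 : ℕ) / m.choose k =
      1 / (m + 1).choose (k + 1) := by
    push_cast
    field_simp
    linear_combination -hwith
  rw [← mul_comm_div, hweight_without, ← mul_comm_div, hweight_with, ← mul_add,
    one_div_mul_eq_div]

section LinearOrder

variable {K : Type*} [Field K] [LinearOrder K] [IsStrictOrderedRing K] {f g : Finset α → K} {c : K}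

lemma expect_powersetCard_le_expect_powersetCard_succ (hk : k < #s)
    (h : ∀ T ∈ s.powersetCard k, ∀ y ∈ s \ T, g T ≤ f (insert y T)) :
    𝔼 T ∈ s.powersetCard k, g T ≤ 𝔼 S ∈ s.powersetCard (k + 1), f S := by
  rw [expect_powersetCard_succ hk]
  exact expect_le_expect fun T hT =>
    le_expect (sdiff_nonempty_of_mem_powersetCard hk hT) (h T hT)

lemma expect_powersetCard_succ_le_expect_powersetCard (hk : k < #s)
    (h : ∀ T ∈ s.powersetCard k, ∀ y ∈ s \ T, f (insert y T) ≤ g T) :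
    𝔼 S ∈ s.powersetCard (k + 1), f S ≤ 𝔼 T ∈ s.powersetCard k, g T := by
  rw [expect_powersetCard_succ hk]
  exact expect_le_expect fun T hT =>
    expect_le (sdiff_nonempty_of_mem_powersetCard hk hT) (h T hT)

lemma expect_powersetCard_le_mul_expect_erase (hx : x ∈ s) (hk : k + 1 < #s)
    (hf : ∀ T ∈ (s.erase x).powersetCard k, ∀ y ∈ s.erase x \ T,
      f (insert x T) ≤ c * f (insert y T)) :
    𝔼 S ∈ s.powersetCard (k + 1), f S ≤
      (1 - (k + 1 : ℕ) / #s + c * ((k + 1 : ℕ) / #s)) *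
        𝔼 S ∈ (s.erase x).powersetCard (k + 1), f S := by
  have hk' : k < #(s.erase x) := by rw [card_erase_of_mem hx]; lia
  have hwith : 𝔼 T ∈ (s.erase x).powersetCard k, f (insert x T) ≤
      c * 𝔼 S ∈ (s.erase x).powersetCard (k + 1), f S := by
    rw [mul_expect]
    exact expect_powersetCard_le_expect_powersetCard_succ hk' hf
  rw [expect_powersetCard_succ_of_mem hx hk, add_mul, mul_comm c, mul_assoc _ c]
  gcongr

lemma mul_expect_erase_le_expect_powersetCard (hx : x ∈ s) (hk : k + 1 < #s)
    (hf : ∀ T ∈ (s.erase x).powersetCard k, ∀ y ∈ s.erase x \ T,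
      c * f (insert y T) ≤ f (insert x T)) :
    (1 - (k + 1 : ℕ) / #s + c * ((k + 1 : ℕ) / #s)) *
        𝔼 S ∈ (s.erase x).powersetCard (k + 1), f S ≤
      𝔼 S ∈ s.powersetCard (k + 1), f S := by
  have hk' : k < #(s.erase x) := by rw [card_erase_of_mem hx]; lia
  have hwith : c * 𝔼 S ∈ (s.erase x).powersetCard (k + 1), f S ≤
      𝔼 T ∈ (s.erase x).powersetCard k, f (insert x T) := by
    rw [mul_expect]
    exact expect_powersetCard_succ_le_expect_powersetCard hk' hf
  rw [expect_powersetCard_succ_of_mem hx hk, add_mul, mul_comm c, mul_assoc _ c]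
  gcongr

end LinearOrder

end PowersetCard

lemma withDensity_ofReal_le_smul {α : Type*} [MeasurableSpace α] {μ : Measure α} {f g : α → ℝ}
    {a : ℝ} (ha : 0 ≤ a) (h : ∀ᵐ x ∂μ, f x ≤ a * g x) :
    μ.withDensity (fun x => ENNReal.ofReal (f x)) ≤
      ENNReal.ofReal a • μ.withDensity fun x => ENNReal.ofReal (g x) := by
  rw [← withDensity_smul' _ _ ENNReal.ofReal_ne_top]
  refine withDensity_mono (h.mono fun x hx => ?_)
  rw [Pi.smul_apply, smul_eq_mul, ← ENNReal.ofReal_mul ha]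
  exact ENNReal.ofReal_le_ofReal hx

section Laplacian

variable {d : ℕ} {σ r : ℝ}

lemma laplacianDensity_le_exp_mul (hσ : 0 < σ) {η ξ : Fin d → ℝ} (h : ∑ i, |η i - ξ i| ≤ r) :
    laplacianDensity d σ η ≤ Real.exp (r / σ) * laplacianDensity d σ ξ := by
  have htriangle : ∑ i, |ξ i| ≤ ∑ i, |η i - ξ i| + ∑ i, |η i| := by
    rw [← sum_add_distrib]
    refine sum_le_sum fun i _ => ?_
    rw [abs_sub_comm]
    exact sub_le_iff_le_add.1 (abs_sub_abs_le_abs_sub _ _)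
  rw [laplacianDensity, laplacianDensity, mul_left_comm, ← Real.exp_add, ← add_div]
  gcongr
  linarith

lemma laplacianDensity_sub_mean_insert_le (hσ : 0 < σ) (k : ℕ) {T : Finset (Fin d → ℝ)}
    {x y : Fin d → ℝ} (hx : x ∉ T) (hy : y ∉ T) (hxy : ∑ i, |x i - y i| ≤ r) (z : Fin d → ℝ) :
    laplacianDensity d σ (z - (k : ℝ)⁻¹ • ∑ u ∈ insert x T, u) ≤
      Real.exp (r / (k * σ)) *
        laplacianDensity d σ (z - (k : ℝ)⁻¹ • ∑ u ∈ insert y T, u) := by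
  have hshift (i : Fin d) : (z - (k : ℝ)⁻¹ • ∑ u ∈ insert x T, u) i -
      (z - (k : ℝ)⁻¹ • ∑ u ∈ insert y T, u) i = (k : ℝ)⁻¹ * (y i - x i) := by
    rw [sum_insert hx, sum_insert hy]
    simp only [Pi.sub_apply, Pi.smul_apply, Pi.add_apply, smul_eq_mul]
    ring
  rw [← div_div]
  refine laplacianDensity_le_exp_mul hσ ?_
  calc ∑ i, |(z - (k : ℝ)⁻¹ • ∑ u ∈ insert x T, u) i -
          (z - (k : ℝ)⁻¹ • ∑ u ∈ insert y T, u) i|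
      = (k : ℝ)⁻¹ * ∑ i, |x i - y i| := by
        simp only [hshift, abs_mul, abs_inv, Nat.abs_cast, mul_sum, abs_sub_comm]
    _ ≤ r / k := by
        rw [inv_mul_eq_div]
        gcongr

end Laplacian

section Mixup

variable {d k : ℕ} {σ r : ℝ} {D : Finset (Fin d → ℝ)} {x₀ : Fin d → ℝ}

lemma mixupDensity_eq_expect (d : ℕ) (σ : ℝ) (k : ℕ) (P : Finset (Fin d → ℝ)) (z : Fin d → ℝ) :
    mixupDensity d σ k P z =
      𝔼 S ∈ P.powersetCard k, laplacianDensity d σ (z - (k : ℝ)⁻¹ • ∑ x ∈ S, x) := by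
  rw [mixupDensity, expect_eq_sum_div_card, card_powersetCard, inv_mul_eq_div]

lemma mixupDensity_le_mul_mixupDensity_erase (hσ : 0 < σ) (hx₀ : x₀ ∈ D)
    (hr : ∀ y ∈ D, ∑ i, |x₀ i - y i| ≤ r) (hk : 1 ≤ k) (hkD : k < #D) (z : Fin d → ℝ) :
    mixupDensity d σ k D z ≤
      (1 - (k : ℝ) / #D + Real.exp (r / (k * σ)) * ((k : ℝ) / #D)) *
        mixupDensity d σ k (D.erase x₀) z := by
  obtain ⟨j, rfl⟩ := Nat.exists_eq_add_of_le' hk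
  simp only [mixupDensity_eq_expect]
  refine expect_powersetCard_le_mul_expect_erase hx₀ hkD fun T hT y hy => ?_
  obtain ⟨hyD, hyT⟩ := mem_sdiff.1 hy
  have hx₀T : x₀ ∉ T := notMem_of_mem_powersetCard_erase hT
  exact laplacianDensity_sub_mean_insert_le hσ (j + 1) hx₀T hyT (hr y (mem_of_mem_erase hyD)) z

lemma mul_mixupDensity_erase_le_mixupDensity (hσ : 0 < σ) (hx₀ : x₀ ∈ D)
    (hr : ∀ y ∈ D, ∑ i, |x₀ i - y i| ≤ r) (hk : 1 ≤ k) (hkD : k < #D) (z : Fin d → ℝ) :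
    (1 - (k : ℝ) / #D + Real.exp (-(r / (k * σ))) * ((k : ℝ) / #D)) *
        mixupDensity d σ k (D.erase x₀) z ≤
      mixupDensity d σ k D z := by
  obtain ⟨j, rfl⟩ := Nat.exists_eq_add_of_le' hk
  simp only [mixupDensity_eq_expect]
  refine mul_expect_erase_le_expect_powersetCard hx₀ hkD fun T hT y hy => ?_
  obtain ⟨hyD, hyT⟩ := mem_sdiff.1 hy
  have hx₀T : x₀ ∉ T := notMem_of_mem_powersetCard_erase hT
  have hdist : ∑ i, |y i - x₀ i| ≤ r := by
    simpa only [abs_sub_comm] using hr y (mem_of_mem_erase hyD)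
  rw [Real.exp_neg, inv_mul_le_iff₀ (Real.exp_pos _)]
  exact laplacianDensity_sub_mean_insert_le hσ (j + 1) hyT hx₀T hdist z

end Mixup

theorem mixup_mechanism_single_draw_dp_general
    {d : ℕ} {σ : ℝ} (hσ : 0 < σ) {D : Finset (Fin d → ℝ)} {x₀ : Fin d → ℝ} (hx₀ : x₀ ∈ D)
    {r : ℝ} (hr : ∀ y ∈ D, ∑ i, |x₀ i - y i| ≤ r) {k : ℕ} (hk : 1 ≤ k) (hkD : k < #D)
    {A B : ℝ}
    (hA : A = Real.log (1 - (k : ℝ) / #D + Real.exp (r / (k * σ)) * ((k : ℝ) / #D)))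
    (hB : B = Real.log ((#D : ℝ) / ((#D : ℝ) - k + k * Real.exp (-(r / (k * σ)))))) :
    mixupLaw d σ k D ≤ ENNReal.ofReal (Real.exp A) • mixupLaw d σ k (D.erase x₀) ∧
    mixupLaw d σ k (D.erase x₀) ≤ ENNReal.ofReal (Real.exp B) • mixupLaw d σ k D := by
  have hD : (0 : ℝ) < #D := by exact_mod_cast hk.trans hkD.le
  have hweight (c : ℝ) : 0 < 1 - (k : ℝ) / #D + Real.exp c * ((k : ℝ) / #D) :=
    add_pos_of_pos_of_nonneg (sub_pos.2 ((div_lt_one hD).2 (by exact_mod_cast hkD)))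
      (by positivity)
  have hexpA : Real.exp A = 1 - (k : ℝ) / #D + Real.exp (r / (k * σ)) * ((k : ℝ) / #D) := by
    rw [hA, Real.exp_log (hweight _)]
  have hexpB : Real.exp B =
      (1 - (k : ℝ) / #D + Real.exp (-(r / (k * σ))) * ((k : ℝ) / #D))⁻¹ := by
    rw [← Real.exp_log (inv_pos.2 (hweight _)), hB]
    congr 2
    field_simp
  refine ⟨withDensity_ofReal_le_smul (Real.exp_pos A).le (.of_forall fun z => ?_),
    withDensity_ofReal_le_smul (Real.exp_pos B).le (.of_forall fun z => ?_)⟩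
  · rw [hexpA]
    exact mixupDensity_le_mul_mixupDensity_erase hσ hx₀ hr hk hkD z
  · rw [hexpB, le_inv_mul_iff₀ (hweight _)]
    exact mul_mixupDensity_erase_le_mixupDensity hσ hx₀ hr hk hkD z

/-- A single draw of the mixup-plus-Laplacian-noise mechanism on a dataset of ℓ¹
diameter at most 1 satisfies `μ_D(U) ≤ e^A·μ_{D'}(U)` and `μ_{D'}(U) ≤ e^B·μ_D(U)`
for every measurable `U`, where `A = log(1 − k/n + exp(1/(kσ))·k/n)` and
`B = log(n/(n − k + k·exp(−1/(kσ))))`; i.e., (max{A,B}, 0)-differential privacy with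
respect to removing `x₀`. -/
theorem mixup_mechanism_single_draw_dp
    (d : ℕ) (hd : 1 ≤ d) (σ : ℝ) (hσ : 0 < σ)
    (D : Finset (Fin d → ℝ)) (n : ℕ) (hn : D.card = n)
    (hdiam : ∀ x ∈ D, ∀ y ∈ D, ∑ i, |x i - y i| ≤ 1)
    (x₀ : Fin d → ℝ) (hx₀ : x₀ ∈ D)
    (k : ℕ) (hk1 : 1 ≤ k) (hkn : k ≤ n - 1)
    (A B : ℝ)
    (hA : A = Real.log (1 - (k : ℝ) / n + Real.exp (1 / (k * σ)) * ((k : ℝ) / n)))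
    (hB : B = Real.log ((n : ℝ) / ((n : ℝ) - k + k * Real.exp (-(1 / (k * σ))))))
    (U : Set (Fin d → ℝ)) (hU : MeasurableSet U) :
    mixupLaw d σ k D U ≤ ENNReal.ofReal (Real.exp A) * mixupLaw d σ k (D.erase x₀) U ∧
    mixupLaw d σ k (D.erase x₀) U ≤ ENNReal.ofReal (Real.exp B) * mixupLaw d σ k D U := by
  subst hn
  have h := mixup_mechanism_single_draw_dp_general hσ hx₀ (hdiam x₀ hx₀) hk1 (by lia) hA hB
  exact ⟨h.1 U, h.2 U⟩
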